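/- (Proposition 1) Let $G$ be a connected finite undirected graph on vertices $\{1, \dots, n\}$, let $v \in \{1,\dots,n\}$, and for $x > 0$ let $\tilde{L}(x)$ be the perturbed Laplacian obtained by attaching pendant vertex $n+1$ to $v$ with edge weight $x$. Then there exists $a > 0$ such that for every $x \in (0, a]$ and every unit eigenvector $\Phi$ of $\tilde{L}(x)$ for its second smallest eigenvalue with $\Phi(n+1) \ge 0$, one has $\Phi(n+1) > \Phi(i)$ for all $i \in \{1, \dots, n\}$; that is, the new vertex $n+1$ is the strict maximum point of the Fiedler vector of the perturbed graph for all sufficiently small weights $x$. -/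

import Mathlib

open Matrix BigOperators

/-- The Laplacian of the graph obtained from a graph `G` on `Fin n` by attaching a new pendant
vertex (the vertex `Fin.last n` of `Fin (n+1)`) to the vertex `v` by an edge of weight `x`:
`L̃(x) = [[L, 0], [0, 0]] + x (e_v - e_{n+1})(e_v - e_{n+1})ᵀ`. -/
noncomputable def pertLap (n : ℕ) (G : SimpleGraph (Fin n)) [DecidableRel G.Adj] (v : Fin n)
    (x : ℝ) : Matrix (Fin (n+1)) (Fin (n+1)) ℝ :=
  Matrix.reindex finSumFinEquiv finSumFinEquiv
      (Matrix.fromBlocks (G.lapMatrix ℝ) 0 0 0) +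
    x • Matrix.vecMulVec
      (fun i => if i = Fin.castSucc v then 1 else if i = Fin.last n then -1 else 0)
      (fun i => if i = Fin.castSucc v then 1 else if i = Fin.last n then -1 else 0)

/-- A real symmetric matrix has an orthonormal eigenbasis ordered like any monotone enumeration
of the roots of its characteristic polynomial. -/
lemma exists_orthonormal_eigenbasis {m : ℕ} {A : Matrix (Fin m) (Fin m) ℝ} (hA : A.IsHermitian)
    {μ : Fin m → ℝ} (hμ : Monotone μ) (hroots : A.charpoly.roots = Finset.univ.val.map μ) :
    ∃ b : OrthonormalBasis (Fin m) ℝ (EuclideanSpace ℝ (Fin m)),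
      ∀ i, A *ᵥ (b i).ofLp = μ i • (b i).ofLp := by
  have hsort : hA.eigenvalues ∘ Tuple.sort hA.eigenvalues = μ := by
    have hperm : (Finset.univ.val.map (hA.eigenvalues ∘ Tuple.sort hA.eigenvalues)) =
        Finset.univ.val.map μ := by
      rw [← hroots, hA.roots_charpoly_eq_eigenvalues, ← Multiset.map_map,
        Multiset.map_univ_val_equiv]
      rfl
    rw [Fin.univ_val_map, Fin.univ_val_map, Multiset.coe_eq_coe] at hperm
    refine List.ofFn_injective (hperm.eq_of_pairwise' (r := (· ≤ ·)) ?_ ?_)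
    · exact (Tuple.monotone_sort hA.eigenvalues).sortedLE_ofFn.pairwise
    · exact hμ.sortedLE_ofFn.pairwise
  refine ⟨hA.eigenvectorBasis.reindex (Tuple.sort hA.eigenvalues).symm, fun i => ?_⟩
  rw [OrthonormalBasis.reindex_apply, Equiv.symm_symm, hA.mulVec_eigenvectorBasis, ← hsort]
  rfl

/-- The quadratic form of a symmetric matrix in an orthonormal eigenbasis. -/
lemma dotProduct_mulVec_eq_sum_eigenbasis {m : ℕ} {A : Matrix (Fin m) (Fin m) ℝ}
    (hA : A.IsHermitian) {μ : Fin m → ℝ}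
    (b : OrthonormalBasis (Fin m) ℝ (EuclideanSpace ℝ (Fin m)))
    (hb : ∀ i, A *ᵥ (b i).ofLp = μ i • (b i).ofLp) (w : Fin m → ℝ) :
    w ⬝ᵥ A *ᵥ w = ∑ i, μ i * ((b i).ofLp ⬝ᵥ w) ^ 2 := by
  have h := b.sum_inner_mul_inner (WithLp.toLp 2 w) (WithLp.toLp 2 (A *ᵥ w))
  simp only [EuclideanSpace.inner_eq_star_dotProduct, star_trivial] at h
  rw [dotProduct_comm, ← h]
  refine Finset.sum_congr rfl fun i _ => ?_
  have hAT : Aᵀ = A := hA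
  have : (A *ᵥ w) ⬝ᵥ (b i).ofLp = μ i * ((b i).ofLp ⬝ᵥ w) := by
    rw [dotProduct_comm, dotProduct_mulVec, ← mulVec_transpose, hAT, hb, smul_dotProduct,
      smul_eq_mul]
  rw [this]
  ring

/-- The second smallest eigenvalue is a lower bound for the Rayleigh quotient of a vector
orthogonal to the bottom eigenvector. -/
lemma second_eigenvalue_mul_le {m : ℕ} {A : Matrix (Fin (m + 2)) (Fin (m + 2)) ℝ}
    (hA : A.IsHermitian) {μ : Fin (m + 2) → ℝ} (hμ : Monotone μ)
    (b : OrthonormalBasis (Fin (m + 2)) ℝ (EuclideanSpace ℝ (Fin (m + 2))))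
    (hb : ∀ i, A *ᵥ (b i).ofLp = μ i • (b i).ofLp) {w : Fin (m + 2) → ℝ}
    (hw : (b 0).ofLp ⬝ᵥ w = 0) : μ 1 * (w ⬝ᵥ w) ≤ w ⬝ᵥ A *ᵥ w := by
  have hone := dotProduct_mulVec_eq_sum_eigenbasis (A := 1) (μ := 1) isHermitian_one b
    (by simp) w
  rw [one_mulVec] at hone
  rw [dotProduct_mulVec_eq_sum_eigenbasis hA b hb, hone, Finset.mul_sum]
  refine Finset.sum_le_sum fun i _ => ?_
  rcases Fin.eq_zero_or_eq_succ i with rfl | ⟨j, rfl⟩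
  · simp [hw]
  · simp only [Pi.one_apply, one_mul]
    refine mul_le_mul_of_nonneg_right (hμ ?_) (sq_nonneg _)
    rw [← Fin.succ_zero_eq_one]
    exact Fin.succ_le_succ_iff.2 (Fin.zero_le j)

lemma isHermitian_pertLap (n : ℕ) (G : SimpleGraph (Fin n)) [DecidableRel G.Adj] (v : Fin n)
    (x : ℝ) : (pertLap n G v x).IsHermitian := by
  have hL : (G.lapMatrix ℝ)ᵀ = G.lapMatrix ℝ := G.isSymm_lapMatrix ℝ
  ext i j
  have h := congrFun₂ (show (fromBlocks (G.lapMatrix ℝ) 0 0 (0 : Matrix (Fin 1) (Fin 1) ℝ))ᵀ =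
    fromBlocks (G.lapMatrix ℝ) 0 0 0 by simp [fromBlocks_transpose, hL])
    (finSumFinEquiv.symm i) (finSumFinEquiv.symm j)
  simp only [transpose_apply] at h
  simp [pertLap, vecMulVec_apply, h, mul_comm]

/-- The bilinear form of the perturbed Laplacian. -/
lemma dotProduct_pertLap_mulVec (n : ℕ) (G : SimpleGraph (Fin n)) [DecidableRel G.Adj]
    (v : Fin n) (x : ℝ) (Ψ Φ : Fin (n + 1) → ℝ) :
    Ψ ⬝ᵥ pertLap n G v x *ᵥ Φ =
      (fun i : Fin n => Ψ i.castSucc) ⬝ᵥ G.lapMatrix ℝ *ᵥ (fun i : Fin n => Φ i.castSucc) +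
        x * ((Ψ v.castSucc - Ψ (Fin.last n)) * (Φ v.castSucc - Φ (Fin.last n))) := by
  have hlast : (finSumFinEquiv (m := n) (n := 1)).symm (Fin.last n) = Sum.inr 0 :=
    finSumFinEquiv_symm_apply_natAdd 0
  have hd : ∀ Θ : Fin (n + 1) → ℝ,
      (fun i => if i = Fin.castSucc v then 1 else if i = Fin.last n then -1 else 0) ⬝ᵥ Θ =
        Θ v.castSucc - Θ (Fin.last n) := by
    intro Θ
    simp [dotProduct, Fin.sum_univ_castSucc, (Fin.castSucc_lt_last _).ne,
      (Fin.castSucc_lt_last _).ne', sub_eq_add_neg]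
  rw [pertLap, add_mulVec, dotProduct_add, smul_mulVec, vecMulVec_mulVec, dotProduct_smul, hd,
    op_smul_eq_smul, dotProduct_smul, dotProduct_comm Ψ (fun i => ite _ _ _), hd]
  congr 1
  · simp [dotProduct, mulVec, Fin.sum_univ_castSucc, hlast]
  · simp only [smul_eq_mul]
    ring

lemma sq_sub_le_lapMatrix_form {V : Type*} [Fintype V] [DecidableEq V] (G : SimpleGraph V)
    [DecidableRel G.Adj] (u : V → ℝ) {i j : V} (hij : G.Adj i j) :
    (u i - u j) ^ 2 ≤ u ⬝ᵥ G.lapMatrix ℝ *ᵥ u := by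
  have h := G.lapMatrix_toLinearMap₂' ℝ u
  rw [toLinearMap₂'_apply'] at h
  rw [h]
  have hnn : ∀ k l, 0 ≤ if G.Adj k l then (u k - u l) ^ 2 else 0 := fun k l => by
    split_ifs <;> positivity
  have h1 : ∀ k l, G.Adj k l →
      (u k - u l) ^ 2 ≤ ∑ j, if G.Adj k j then (u k - u j) ^ 2 else 0 := fun k l hkl => by
    have := Finset.single_le_sum (fun j _ => hnn k j) (Finset.mem_univ l)
    simpa only [if_pos hkl] using this
  have h2 := Finset.add_le_sum
    (f := fun k => ∑ j, if G.Adj k j then (u k - u j) ^ 2 else 0)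
    (fun k _ => Finset.sum_nonneg fun l _ => hnn k l)
    (Finset.mem_univ i) (Finset.mem_univ j) hij.ne
  have h3 := h1 i j hij
  have h4 := h1 j i hij.symm
  have h5 : (u j - u i) ^ 2 = (u i - u j) ^ 2 := by ring
  linarith

lemma lapMatrix_form_nonneg {V : Type*} [Fintype V] [DecidableEq V] (G : SimpleGraph V)
    [DecidableRel G.Adj] (u : V → ℝ) : 0 ≤ u ⬝ᵥ G.lapMatrix ℝ *ᵥ u := by
  simpa using (G.posSemidef_lapMatrix ℝ).dotProduct_mulVec_nonneg u

/-- On a connected graph, the oscillation of a function is controlled by the square root of its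
Dirichlet energy. -/
lemma exists_abs_sub_le_sqrt_lapMatrix_form {V : Type*} [Fintype V] [DecidableEq V]
    (G : SimpleGraph V) [DecidableRel G.Adj] (hG : G.Connected) :
    ∃ K : ℝ, 0 < K ∧ ∀ (u : V → ℝ) (i j : V),
      |u i - u j| ≤ K * Real.sqrt (u ⬝ᵥ G.lapMatrix ℝ *ᵥ u) := by
  have hwalk : ∀ {i j : V} (p : G.Walk i j) (u : V → ℝ),
      |u i - u j| ≤ p.length * Real.sqrt (u ⬝ᵥ G.lapMatrix ℝ *ᵥ u) := by
    intro i j p u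
    induction p with
    | nil => simp
    | @cons a b c hab p ih =>
      have h1 := Real.abs_le_sqrt (sq_sub_le_lapMatrix_form G u hab)
      have h2 := abs_sub_le (u a) (u b) (u c)
      rw [SimpleGraph.Walk.length_cons]
      push_cast
      linarith
  refine ⟨Fintype.card V, by exact_mod_cast Fintype.card_pos_iff.2 hG.nonempty, fun u i j => ?_⟩
  obtain ⟨p, hp⟩ := (hG.preconnected i j).exists_isPath
  refine (hwalk p u).trans (mul_le_mul_of_nonneg_right ?_ (Real.sqrt_nonneg _))
  exact_mod_cast hp.length_lt.le

lemma eq_of_pertLap_form_nonpos {n : ℕ} {G : SimpleGraph (Fin n)} [DecidableRel G.Adj]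
    (hG : G.Connected) {v : Fin n} {x : ℝ} (hx : 0 < x) {Φ : Fin (n + 1) → ℝ}
    (h : Φ ⬝ᵥ pertLap n G v x *ᵥ Φ ≤ 0) (i : Fin (n + 1)) : Φ i = Φ (Fin.last n) := by
  rw [dotProduct_pertLap_mulVec] at h
  obtain ⟨K, -, hK⟩ := exists_abs_sub_le_sqrt_lapMatrix_form G hG
  have h1 := lapMatrix_form_nonneg G (fun i : Fin n => Φ i.castSucc)
  have h2 : 0 ≤ x * ((Φ v.castSucc - Φ (Fin.last n)) * (Φ v.castSucc - Φ (Fin.last n))) :=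
    mul_nonneg hx.le (mul_self_nonneg _)
  have hv : Φ v.castSucc - Φ (Fin.last n) = 0 := by
    have : x * ((Φ v.castSucc - Φ (Fin.last n)) * (Φ v.castSucc - Φ (Fin.last n))) = 0 := by
      linarith
    simpa [hx.ne'] using this
  refine Fin.lastCases rfl (fun j => ?_) i
  have hj := hK (fun i : Fin n => Φ i.castSucc) j v
  rw [le_antisymm (by linarith) h1] at hj
  simp only [Real.sqrt_zero, mul_zero, abs_nonpos_iff] at hj
  linarith

/-- The second smallest eigenvalue of the perturbed Laplacian is positive. -/
lemma second_eigenvalue_pertLap_pos {m : ℕ} {G : SimpleGraph (Fin (m + 1))} [DecidableRel G.Adj]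
    (hG : G.Connected) {v : Fin (m + 1)} {x : ℝ} (hx : 0 < x) {μ : Fin (m + 2) → ℝ}
    (hμ : Monotone μ) (b : OrthonormalBasis (Fin (m + 2)) ℝ (EuclideanSpace ℝ (Fin (m + 2))))
    (hb : ∀ i, pertLap (m + 1) G v x *ᵥ (b i).ofLp = μ i • (b i).ofLp) : 0 < μ 1 := by
  by_contra! hle
  have hself : ∀ i, (b i).ofLp ⬝ᵥ (b i).ofLp = 1 := fun i => by
    have := b.inner_eq_ite i i
    rw [EuclideanSpace.inner_eq_star_dotProduct] at this
    simpa using this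
  have hconst : ∀ i, μ i ≤ 0 → ∀ k, (b i).ofLp k = (b i).ofLp (Fin.last (m + 1)) := fun i hi =>
    eq_of_pertLap_form_nonpos hG hx (v := v) (by
      rw [hb, dotProduct_smul, hself]
      simpa using hi)
  have h0 := hconst 0 ((hμ (Fin.zero_le 1)).trans hle)
  have h1 := hconst 1 hle
  have horth : (b 1).ofLp ⬝ᵥ (b 0).ofLp = 0 := by
    have := b.inner_eq_ite 0 1
    rw [EuclideanSpace.inner_eq_star_dotProduct] at this
    simpa using this
  have hs0 := hself 0
  have hs1 := hself 1
  simp only [dotProduct, h0, h1, Finset.sum_const, Finset.card_univ, Fintype.card_fin,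
    nsmul_eq_mul] at horth hs0 hs1
  simp only [mul_eq_zero] at horth
  rcases horth with h | h | h
  · simp [h] at hs0
  · simp [h] at hs1
  · simp [h] at hs0

/-- The second smallest eigenvalue of the perturbed Laplacian is at most `2 * x`. -/
lemma second_eigenvalue_pertLap_le {m : ℕ} {G : SimpleGraph (Fin (m + 1))} [DecidableRel G.Adj]
    {v : Fin (m + 1)} {x : ℝ} (hx : 0 < x) {μ : Fin (m + 2) → ℝ}
    (hμ : Monotone μ) (b : OrthonormalBasis (Fin (m + 2)) ℝ (EuclideanSpace ℝ (Fin (m + 2))))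
    (hb : ∀ i, pertLap (m + 1) G v x *ᵥ (b i).ofLp = μ i • (b i).ofLp) : μ 1 ≤ 2 * x := by
  obtain ⟨α, β, hne, horth⟩ : ∃ α β : ℝ, 0 < α ^ 2 + β ^ 2 ∧
      (∑ i : Fin (m + 1), (b 0).ofLp i.castSucc) * α + (b 0).ofLp (Fin.last _) * β = 0 := by
    by_cases h : (b 0).ofLp (Fin.last _) = 0
    · by_cases h' : (∑ i : Fin (m + 1), (b 0).ofLp i.castSucc) = 0
      · exact ⟨1, 0, by norm_num, by simp [h']⟩
      · exact ⟨0, 1, by norm_num, by simp [h]⟩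
    · exact ⟨-(b 0).ofLp (Fin.last _), ∑ i : Fin (m + 1), (b 0).ofLp i.castSucc,
        by rw [neg_sq]; positivity, by ring⟩
  set w : Fin (m + 2) → ℝ := Fin.snoc (fun _ : Fin (m + 1) => α) β with hwdef
  have hwl : w (Fin.last _) = β := by simp [hwdef]
  have hwc : ∀ i : Fin (m + 1), w i.castSucc = α := fun i => by simp [hwdef]
  have hw : (b 0).ofLp ⬝ᵥ w = 0 := by
    rw [dotProduct, Fin.sum_univ_castSucc]
    simp only [hwl, hwc, ← Finset.sum_mul]
    exact horth
  have key := second_eigenvalue_mul_le (isHermitian_pertLap _ G v x) hμ b hb hw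
  have hL : G.lapMatrix ℝ *ᵥ (fun _ => α) = 0 := by
    ext i
    simp [SimpleGraph.lapMatrix_mulVec_apply]
  have hww : w ⬝ᵥ w = (m + 1) * α ^ 2 + β ^ 2 := by
    rw [dotProduct, Fin.sum_univ_castSucc]
    simp only [hwl, hwc]
    simp
    ring
  rw [dotProduct_pertLap_mulVec] at key
  simp only [hwl, hwc, hL, dotProduct_zero, zero_add, hww] at key
  have hge : α ^ 2 + β ^ 2 ≤ (m + 1) * α ^ 2 + β ^ 2 := by
    nlinarith [mul_nonneg (Nat.cast_nonneg (α := ℝ) m) (sq_nonneg α)]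
  by_contra! hlt
  have h1 : (α - β) * (α - β) ≤ 2 * (α ^ 2 + β ^ 2) := by nlinarith [sq_nonneg (α + β)]
  have h2 := mul_le_mul_of_nonneg_left h1 hx.le
  have h3 := mul_le_mul_of_nonneg_left hge (by linarith : (0 : ℝ) ≤ 2 * x)
  have h4 := mul_lt_mul_of_pos_right hlt (hne.trans_le hge)
  linarith

/-- If a unit vector has zero sum, its last entry is nonnegative, and its other entries are
pairwise `ε`-close with `ε` small, then the last entry is the strict maximum. -/
lemma lt_last_of_close {n : ℕ} {Φ : Fin (n + 1) → ℝ} {ε : ℝ} (hε : 4 * (n + 1) * ε ^ 2 < 1)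
    (hn : 0 < n) (hunit : ∑ i, Φ i ^ 2 = 1) (hsum : ∑ i, Φ i = 0) (hlast : 0 ≤ Φ (Fin.last n))
    (hclose : ∀ i j : Fin n, |Φ i.castSucc - Φ j.castSucc| ≤ ε) (i : Fin n) :
    Φ i.castSucc < Φ (Fin.last n) := by
  have hn' : (1 : ℝ) ≤ n := by exact_mod_cast hn
  set t := Φ (Fin.last n) with ht
  have hε0 : 0 ≤ ε := (abs_nonneg _).trans (hclose i i)
  have hmean : ∀ k : Fin n, |n * Φ k.castSucc + t| ≤ n * ε := by
    intro k
    have h1 : n * Φ k.castSucc + t = ∑ j : Fin n, (Φ k.castSucc - Φ j.castSucc) := by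
      rw [Fin.sum_univ_castSucc] at hsum
      rw [Finset.sum_sub_distrib]
      simp only [Finset.sum_const, Finset.card_univ, Fintype.card_fin, nsmul_eq_mul]
      linarith
    rw [h1]
    refine (Finset.abs_sum_le_sum_abs _ _).trans ?_
    refine (Finset.sum_le_sum fun j _ => hclose k j).trans ?_
    simp
  have hlt : ε < t := by
    by_contra! hle
    have hb : ∀ k : Fin (n + 1), Φ k ^ 2 ≤ (2 * ε) ^ 2 := by
      intro k
      refine sq_le_sq' ?_ ?_ <;> refine Fin.lastCases ?_ (fun j => ?_) k
      · linarith
      · have := (abs_le.1 (hmean j)).1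
        nlinarith
      · linarith
      · have := (abs_le.1 (hmean j)).2
        nlinarith
    have := Finset.sum_le_sum fun k (_ : k ∈ Finset.univ) => hb k
    rw [hunit] at this
    simp only [Finset.sum_const, Finset.card_univ, Fintype.card_fin, nsmul_eq_mul] at this
    push_cast at this
    nlinarith
  have := (abs_le.1 (hmean i)).2
  nlinarith

/-- **Proposition 1.** For a connected graph `G`, a vertex `v` and the perturbed
Laplacian `L̃(x)`, there exists `a > 0` such that for every `x ∈ (0, a]` and every unit
eigenvector `Φ` of `L̃(x)` for its second smallest eigenvalue `μ 1` (eigenvalues with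
multiplicity enumerated in increasing order by `μ`) with `Φ(n+1) ≥ 0`, the new vertex `n+1` is
the strict maximum point of `Φ`. -/
theorem fiedler_stmt_9 (n : ℕ) (G : SimpleGraph (Fin n)) [DecidableRel G.Adj]
    (hG : G.Connected) (v : Fin n) :
    ∃ a > (0 : ℝ), ∀ x : ℝ, 0 < x → x ≤ a →
      ∀ μ : Fin (n+1) → ℝ, Monotone μ →
        (pertLap n G v x).charpoly.roots = Finset.univ.val.map μ →
        ∀ Φ : Fin (n+1) → ℝ, ∑ i, Φ i ^ 2 = 1 →
          pertLap n G v x *ᵥ Φ = μ 1 • Φ → 0 ≤ Φ (Fin.last n) →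
          ∀ i : Fin n, Φ (Fin.castSucc i) < Φ (Fin.last n) := by
  obtain ⟨m, rfl⟩ : ∃ m, n = m + 1 := ⟨n - 1, by have := v.isLt; omega⟩
  obtain ⟨K, hK0, hK⟩ := exists_abs_sub_le_sqrt_lapMatrix_form G hG
  refine ⟨1 / (16 * (m + 2) * K ^ 2), by positivity, ?_⟩
  intro x hx hxa μ hμ hroots Φ hunit heig hlast
  obtain ⟨b, hb⟩ := exists_orthonormal_eigenbasis (isHermitian_pertLap _ G v x) hμ hroots
  have hpos := second_eigenvalue_pertLap_pos hG hx hμ b hb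
  have hle := second_eigenvalue_pertLap_le hx hμ b hb
  have hsum : ∑ i, Φ i = 0 := by
    have h1 := dotProduct_pertLap_mulVec (m + 1) G v x Φ (fun _ => 1)
    rw [G.lapMatrix_mulVec_const_eq_zero, dotProduct_mulVec, ← mulVec_transpose,
      show (pertLap (m + 1) G v x)ᵀ = _ from isHermitian_pertLap _ G v x, heig] at h1
    simpa [dotProduct, ← Finset.mul_sum, hpos.ne'] using h1
  have henergy : (fun i : Fin (m + 1) => Φ i.castSucc) ⬝ᵥ
      G.lapMatrix ℝ *ᵥ (fun i : Fin (m + 1) => Φ i.castSucc) ≤ 2 * x := by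
    have h1 := dotProduct_pertLap_mulVec (m + 1) G v x Φ Φ
    have h2 : Φ ⬝ᵥ Φ = 1 := by simpa [dotProduct, sq] using hunit
    rw [heig, dotProduct_smul, h2, smul_eq_mul, mul_one] at h1
    have h3 := mul_nonneg hx.le (mul_self_nonneg (Φ v.castSucc - Φ (Fin.last (m + 1))))
    linarith
  refine lt_last_of_close (ε := K * Real.sqrt (2 * x)) ?_ m.succ_pos hunit hsum hlast
    fun i j => (hK _ i j).trans
      (mul_le_mul_of_nonneg_left (Real.sqrt_le_sqrt henergy) hK0.le)
  rw [mul_pow, Real.sq_sqrt (by linarith)]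
  rw [le_div_iff₀ (by positivity)] at hxa
  push_cast
  nlinarith
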